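/- Let K ⊆ ℝ² be a two-dimensional convex body. Then i(K,R(K)) < ∞ if and only if there exists δ > 0 such that K ∩ B°(c_K,δ) ⊆ ⋃_{x ∈ K ∩ bd(B(c_K,R(K)))} (K + (c_K − x)), i.e., the union of the translates K + (c_K − x) over all x ∈ K ∩ bd(B(c_K,R(K))) covers a neighborhood of c_K in K. -/

import Mathlib

open Metric Set
open scoped RealInnerProductSpace

/-- The quantified t-illumination number `i(K,ε)`: the least `m` for which there exist
unit vectors `r_1, …, r_m` such that every `x ∈ K` satisfies `x + ε • r_i ∈ K` for some `i`;
`∞` if no finite such family exists. -/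
noncomputable def iq {n : ℕ} (K : Set (EuclideanSpace ℝ (Fin n))) (ε : ℝ) : ℕ∞ :=
  sInf {m : ℕ∞ | ∃ s : Finset (EuclideanSpace ℝ (Fin n)), (s.card : ℕ∞) = m ∧
    (∀ r ∈ s, ‖r‖ = 1) ∧ ∀ x ∈ K, ∃ r ∈ s, x + ε • r ∈ K}

/-- The quantified illumination number `c(K,ε)`: the least `m` for which there exist
unit vectors `r_1, …, r_m` such that every `x ∈ K` satisfies `x + ε • r_i ∈ int K` for some `i`;
`∞` if no finite such family exists. -/
noncomputable def cq {n : ℕ} (K : Set (EuclideanSpace ℝ (Fin n))) (ε : ℝ) : ℕ∞ :=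
  sInf {m : ℕ∞ | ∃ s : Finset (EuclideanSpace ℝ (Fin n)), (s.card : ℕ∞) = m ∧
    (∀ r ∈ s, ‖r‖ = 1) ∧ ∀ x ∈ K, ∃ r ∈ s, x + ε • r ∈ interior K}

/-- `B(c, R)` is the circumball of `K`: a closed ball containing `K` of minimal radius. -/
def IsCircumball {n : ℕ} (K : Set (EuclideanSpace ℝ (Fin n)))
    (c : EuclideanSpace ℝ (Fin n)) (R : ℝ) : Prop :=
  K ⊆ closedBall c R ∧ ∀ (c' : EuclideanSpace ℝ (Fin n)) (R' : ℝ), K ⊆ closedBall c' R' → R ≤ R'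

local notation "E2" => EuclideanSpace ℝ (Fin 2)

/-- signed determinant -/
def dd (s : ℝ) (a b : E2) : ℝ := s * (a 0 * b 1 - a 1 * b 0)

lemma dd_cont_left (s : ℝ) (b : E2) : Continuous (fun a : E2 => dd s a b) := by
  unfold dd; fun_prop

lemma dd_cont_right (s : ℝ) (a : E2) : Continuous (fun b : E2 => dd s a b) := by
  unfold dd; fun_prop

lemma inner2 (a b : E2) : inner ℝ a b = a 0 * b 0 + a 1 * b 1 := by
  simp [PiLp.inner_apply, Fin.sum_univ_two]; ring

lemma norm2 (a : E2) : ‖a‖ ^ 2 = a 0 * a 0 + a 1 * a 1 := by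
  rw [← real_inner_self_eq_norm_sq, inner2]

lemma support_pt (K : Set E2) (hKc : IsCompact K) (hKne : K.Nonempty) (R : ℝ) (hR : 0 < R)
    (hsub : K ⊆ closedBall 0 R)
    (hmin : ∀ (c' : E2) (R' : ℝ), K ⊆ closedBall c' R' → R ≤ R') (w : E2) :
    ∃ p ∈ K, ‖p‖ = R ∧ inner ℝ p w ≤ 0 := by
  have h1 : ∀ n : ℕ, ∃ x ∈ K, R ≤ ‖x - (1 / ((n : ℝ) + 1)) • w‖ := by
    intro n
    obtain ⟨x, hx, hmax⟩ := hKc.exists_isMaxOn hKne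
      (f := fun x => ‖x - (1 / ((n : ℝ) + 1)) • w‖) (by fun_prop)
    refine ⟨x, hx, hmin ((1 / ((n : ℝ) + 1)) • w) _ ?_⟩
    intro y hy
    rw [mem_closedBall, dist_eq_norm]
    exact hmax hy
  choose x hx hxR using h1
  obtain ⟨p, hp, φ, hφ, hlim⟩ := hKc.tendsto_subseq hx
  have hs : Filter.Tendsto (fun n : ℕ => 1 / ((φ n : ℝ) + 1)) Filter.atTop (nhds 0) :=
    (tendsto_one_div_add_atTop_nhds_zero_nat (𝕜 := ℝ)).comp hφ.tendsto_atTop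
  have hnx : ∀ n, ‖x n‖ ≤ R := fun n => by simpa using hsub (hx n)
  refine ⟨p, hp, le_antisymm (by simpa using hsub hp) ?_, ?_⟩
  · have : Filter.Tendsto (fun n : ℕ => ‖x (φ n) - (1 / ((φ n : ℝ) + 1)) • w‖) Filter.atTop
        (nhds ‖p - (0 : ℝ) • w‖) := (hlim.sub (hs.smul_const w)).norm
    have h2 := ge_of_tendsto' this (fun n => hxR (φ n))
    simpa using h2
  · have hl : Filter.Tendsto (fun n => inner ℝ (x (φ n)) w) Filter.atTop (nhds (inner ℝ p w)) :=
      hlim.inner tendsto_const_nhds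
    have hr : Filter.Tendsto (fun n : ℕ => (1 / ((φ n : ℝ) + 1)) * (‖w‖ ^ 2 / 2)) Filter.atTop
        (nhds (0 * (‖w‖ ^ 2 / 2))) := hs.mul_const _
    rw [zero_mul] at hr
    refine le_of_tendsto_of_tendsto' hl hr (fun n => ?_)
    set s : ℝ := 1 / ((φ n : ℝ) + 1) with hsdef
    have hspos : 0 < s := by positivity
    have h3 : R ≤ ‖x (φ n) - s • w‖ := hxR (φ n)
    have h4 := norm_sub_sq_real (x (φ n)) (s • w)
    rw [inner_smul_right, norm_smul, Real.norm_of_nonneg hspos.le] at h4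
    have h5 : ‖x (φ n)‖ ≤ R := hnx _
    have h6 : R ^ 2 ≤ ‖x (φ n) - s • w‖ ^ 2 := by gcongr
    have h7 : ‖x (φ n)‖ ^ 2 ≤ R ^ 2 := by gcongr
    have h8 : s * (inner ℝ (x (φ n)) w) ≤ s * (s * (‖w‖ ^ 2 / 2)) := by nlinarith
    exact le_of_mul_le_mul_left h8 hspos

lemma zero_mem (K : Set E2) (hKc : IsCompact K) (hKconv : Convex ℝ K)
    (hsup : ∀ w : E2, ∃ p ∈ K, inner ℝ p w ≤ 0) : (0 : E2) ∈ K := by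
  by_contra h
  obtain ⟨f, u, hu, hf⟩ := geometric_hahn_banach_point_closed hKconv hKc.isClosed h
  obtain ⟨p, hp, hpw⟩ := hsup ((InnerProductSpace.toDual ℝ E2).symm f)
  rw [real_inner_comm, InnerProductSpace.toDual_symm_apply] at hpw
  have := hf p hp
  simp at hu
  linarith

lemma face_pt (K : Set E2) (hKc : IsCompact K) (R : ℝ)
    (hsup : ∀ w : E2, ∃ p ∈ K, ‖p‖ = R ∧ inner ℝ p w ≤ 0) (w z : E2)
    (hw : ∀ x ∈ K, 0 ≤ inner ℝ x w) :
    ∃ p ∈ K, ‖p‖ = R ∧ inner ℝ p w = 0 ∧ inner ℝ p z ≤ 0 := by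
  by_contra hcon
  push Not at hcon
  set Q : Set E2 := K ∩ {x | ‖x‖ = R ∧ inner ℝ x z ≤ 0} with hQ
  have hQc : IsCompact Q := hKc.inter_right
    ((isClosed_eq (f := fun x : E2 => ‖x‖) (g := fun _ => R) (by fun_prop) (by fun_prop)).inter
      (isClosed_le (f := fun x : E2 => (inner ℝ x z : ℝ)) (g := fun _ => 0)
        (by fun_prop) (by fun_prop)))
  have hQne : Q.Nonempty := by
    obtain ⟨p, h1, h2, h3⟩ := hsup z
    exact ⟨p, h1, h2, h3⟩
  obtain ⟨q, hq, hmin⟩ := hQc.exists_isMinOn hQne (f := fun x => inner ℝ x w) (by fun_prop)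
  set m := (inner ℝ q w : ℝ) with hm
  have hmpos : 0 < m := by
    rcases (hw q hq.1).lt_or_eq with h | h
    · exact h
    · exact absurd hq.2.2 (not_le.mpr (hcon q hq.1 hq.2.1 h.symm))
  have hR : 0 ≤ R := hq.2.1 ▸ norm_nonneg q
  set s : ℝ := m / (R * ‖z‖ + 1) with hs
  have hRz : 0 ≤ R * ‖z‖ := by positivity
  have hspos : 0 < s := by positivity
  have hsm : s * (R * ‖z‖) < m := by
    have : s * (R * ‖z‖ + 1) = m := by rw [hs]; field_simp
    nlinarith
  obtain ⟨p, hp, hpR, hpw⟩ := hsup (w + s • z)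
  rw [inner_add_right, inner_smul_right] at hpw
  by_cases hpz : inner ℝ p z ≤ 0
  · have h1 : m ≤ inner ℝ p w := hmin ⟨hp, hpR, hpz⟩
    have h2 : -(R * ‖z‖) ≤ inner ℝ p z := by
      have := neg_le_of_abs_le (abs_real_inner_le_norm p z)
      rwa [hpR] at this
    nlinarith
  · have := hw p hp
    push Not at hpz
    have := mul_pos hspos hpz
    linarith

lemma cone_ball (K : Set E2) (hKc : IsCompact K) (hKconv : Convex ℝ K)
    (hKint : (interior K).Nonempty) (R : ℝ) (hR : 0 < R)
    (hsup : ∀ w : E2, ∃ p ∈ K, ‖p‖ = R ∧ inner ℝ p w ≤ 0) (h0 : (0 : E2) ∈ K) :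
    ∃ t : ℝ, 0 < t ∧ ∀ x ∈ K, ∀ y ∈ K, ∀ a b : ℝ, 0 ≤ a → 0 ≤ b → ‖a • x + b • y‖ ≤ t →
      a • x + b • y ∈ K := by
  by_cases hi : (0 : E2) ∈ interior K
  · obtain ⟨t, ht, hball⟩ := Metric.nhds_basis_closedBall.mem_iff.1 (mem_interior_iff_mem_nhds.1 hi)
    exact ⟨t, ht, fun x _ y _ a b _ _ h => hball (by simpa using h)⟩
  · obtain ⟨f, hf⟩ := geometric_hahn_banach_point_open hKconv.interior isOpen_interior hi
    obtain ⟨y0, hy0⟩ := hKint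
    set w := (InnerProductSpace.toDual ℝ E2).symm f with hwdef
    have hfw : ∀ x, f x = inner ℝ x w := fun x => by
      rw [real_inner_comm, hwdef, InnerProductSpace.toDual_symm_apply]
    have hw : ∀ x ∈ K, 0 ≤ inner ℝ x w := by
      intro x hx
      have hcl : x ∈ closure (interior K) := by
        rw [hKconv.closure_interior_eq_closure_of_nonempty_interior ⟨y0, hy0⟩]
        exact subset_closure hx
      have : closure (interior K) ⊆ {x | 0 ≤ inner ℝ x w} := by
        refine closure_minimal (fun y hy => ?_) (isClosed_le (by fun_prop) (by fun_prop))
        have := hf y hy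
        rw [hfw y] at this
        simp at this
        exact this.le
      exact this hcl
    have hy0w : 0 < inner ℝ y0 w := by
      have := hf y0 hy0
      rw [hfw y0] at this
      simpa using this
    have hy0K := interior_subset hy0
    set z : E2 := !₂[-(w 1), w 0] with hz
    have hz0 : z 0 = - w 1 := by simp [hz]
    have hz1 : z 1 = w 0 := by simp [hz]
    have hwpos : 0 < w 0 * w 0 + w 1 * w 1 := by
      have : w ≠ 0 := by rintro h; rw [h] at hy0w; simp at hy0w
      rw [← norm2]; positivity
    set N := w 0 * w 0 + w 1 * w 1 with hN
    have key : ∀ x : E2, inner ℝ x w = 0 → x = (inner ℝ x z / N) • z := by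
      intro x hx
      rw [inner2] at hx
      ext i
      fin_cases i
      · simp [inner2, hz0, hz1]; field_simp; rw [hN]
        linear_combination (w 0) * hx
      · simp [inner2, hz0, hz1]; field_simp; rw [hN]
        linear_combination (w 1) * hx
    obtain ⟨p, hp, hpR, hpw, hpz⟩ := face_pt K hKc R hsup w z hw
    obtain ⟨q, hq, hqR, hqw, hqz⟩ := face_pt K hKc R hsup w (-z) hw
    rw [inner_neg_right] at hqz
    have hpk := key p hpw
    have hqk := key q hqw
    set a := (inner ℝ p z / N : ℝ) with ha
    set b := (inner ℝ q z / N : ℝ) with hb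
    have ha0 : a < 0 := by
      refine lt_of_le_of_ne (div_nonpos_of_nonpos_of_nonneg hpz hwpos.le) (fun h => ?_)
      rw [h, zero_smul] at hpk
      rw [hpk, norm_zero] at hpR; exact hR.ne hpR
    have hb0 : 0 < b := by
      refine lt_of_le_of_ne (div_nonneg (by linarith) hwpos.le) (fun h => ?_)
      rw [← h, zero_smul] at hqk
      rw [hqk, norm_zero] at hqR; exact hR.ne hqR
    let β : E2 → ℝ := fun x => inner ℝ x w / inner ℝ y0 w
    let γ : E2 → ℝ := fun x => inner ℝ (x - β x • y0) z / N
    have hβc : Continuous β := by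
      have : Continuous (fun x : E2 => (inner ℝ x w : ℝ)) := by fun_prop
      exact this.div_const _
    have hγc : Continuous γ := by
      have : Continuous (fun x : E2 => (inner ℝ (x - β x • y0) z : ℝ)) := by fun_prop
      exact this.div_const _
    have hβ0 : β 0 = 0 := by simp [β]
    have hγ0 : γ 0 = 0 := by simp [γ, hβ0]
    have hev : ∀ᶠ x in nhds (0 : E2), β x + γ x / b < 1 ∧ β x + γ x / a < 1 := by
      refine Filter.Eventually.and ?_ ?_
      · have : Continuous (fun x => β x + γ x / b) := hβc.add (hγc.div_const _)
        exact this.continuousAt.eventually_lt continuousAt_const (by simp [hβ0, hγ0])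
      · have : Continuous (fun x => β x + γ x / a) := hβc.add (hγc.div_const _)
        exact this.continuousAt.eventually_lt continuousAt_const (by simp [hβ0, hγ0])
    obtain ⟨t, ht, hball⟩ := Metric.nhds_basis_closedBall.eventually_iff.1 hev
    have hmain : ∀ x : E2, 0 ≤ inner ℝ x w → ‖x‖ ≤ t → x ∈ K := by
      intro x hx hxt
      have hlt := hball (show x ∈ closedBall 0 t by simpa using hxt)
      have hβp : 0 ≤ β x := div_nonneg hx hy0w.le
      have hk : x - β x • y0 = γ x • z := by
        apply key
        rw [inner_sub_left, inner_smul_left]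
        simp [β]; field_simp; ring
      have tri : ∀ (v : E2) (s : ℝ), v ∈ K → 0 ≤ s → β x + s < 1 → β x • y0 + s • v ∈ K := by
        intro v s hv hs hlt
        have := hKconv.sum_mem (t := Finset.univ) (w := ![β x, s, 1 - β x - s])
          (z := ![y0, v, 0]) (by intro i _; fin_cases i <;> simp <;> linarith)
          (by simp [Fin.sum_univ_three]) (by intro i _; fin_cases i <;> simp <;> assumption)
        simpa [Fin.sum_univ_three] using this
      rcases le_total 0 (γ x) with h | h
      · have := tri q (γ x / b) hq (by positivity) hlt.1
        rw [hqk, smul_smul, div_mul_cancel₀ _ hb0.ne', ← hk] at this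
        simpa using this
      · have := tri p (γ x / a) hp (div_nonneg_of_nonpos h ha0.le) hlt.2
        rw [hpk, smul_smul, div_mul_cancel₀ _ ha0.ne, ← hk] at this
        simpa using this
    refine ⟨t, ht, fun x hx y hy a b ha hb h => hmain _ ?_ h⟩
    rw [inner_add_left, inner_smul_left, inner_smul_left]
    have := mul_nonneg ha (hw x hx)
    have := mul_nonneg hb (hw y hy)
    simp; linarith

lemma tri_mem (K : Set E2) (hKconv : Convex ℝ K) (h0 : (0 : E2) ∈ K) (p v0 v : E2) (hp : p ∈ K)
    (hv0 : v0 + p ∈ K) (a b M : ℝ) (ha : 0 ≤ a) (hb : 0 ≤ b) (hM : 0 < M) (hab : a + b ≤ M)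
    (hv : v = a • v0 - b • p) : (1 / M) • v + p ∈ K := by
  have h1 : 0 ≤ 1 - a / M - b / M := by
    rw [← sub_nonneg] at hab
    have : 1 - a / M - b / M = (M - (a + b)) / M := by field_simp; ring
    rw [this]; positivity
  have := hKconv.sum_mem (t := Finset.univ) (w := ![a / M, b / M, 1 - a / M - b / M])
    (z := ![v0 + p, 0, p]) (by intro i _; fin_cases i <;> simp <;> first | positivity | linarith)
    (by simp [Fin.sum_univ_three]) (by intro i _; fin_cases i <;> simp <;> assumption)
  convert this using 1
  simp only [Fin.sum_univ_three, Matrix.cons_val]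
  rw [hv]
  module

lemma tri_near (K : Set E2) (hKconv : Convex ℝ K) (h0 : (0 : E2) ∈ K) (s : ℝ) (p v0 u : E2)
    (hp : p ∈ K) (hv0 : v0 + p ∈ K) (hd : dd s v0 p ≠ 0) :
    ∃ ε : ℝ, 0 < ε ∧ ∀ᶠ v in nhds u, 0 ≤ dd s v p / dd s v0 p → 0 ≤ - dd s v0 v / dd s v0 p →
      ε • v + p ∈ K := by
  let f : E2 → ℝ := fun v => dd s v p / dd s v0 p + - dd s v0 v / dd s v0 p
  have hf : Continuous f :=
    ((dd_cont_left s p).div_const _).add ((dd_cont_right s v0).neg.div_const _)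
  have hM : 0 < |f u| + 1 := by positivity
  refine ⟨1 / (|f u| + 1), by positivity, ?_⟩
  have hev : ∀ᶠ v in nhds u, f v < |f u| + 1 :=
    hf.continuousAt.eventually_lt continuousAt_const (by linarith [le_abs_self (f u)])
  filter_upwards [hev] with v hv h1 h2
  refine tri_mem K hKconv h0 p v0 v hp hv0 _ _ _ h1 h2 hM hv.le ?_
  have : dd s v0 p • v = dd s v p • v0 - (- dd s v0 v) • p := by
    ext i
    fin_cases i <;> simp [dd] <;> ring
  rw [div_eq_inv_mul, div_eq_inv_mul, mul_smul, mul_smul, ← smul_sub, ← this, smul_smul,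
    inv_mul_cancel₀ hd, one_smul]

lemma side (K : Set E2) (hKc : IsCompact K) (hKconv : Convex ℝ K) (R t : ℝ) (ht : 0 < t)
    (hsub : K ⊆ closedBall 0 R) (h0 : (0 : E2) ∈ K)
    (hcone : ∀ x ∈ K, ∀ y ∈ K, ∀ a b : ℝ, 0 ≤ a → 0 ≤ b → ‖a • x + b • y‖ ≤ t →
      a • x + b • y ∈ K)
    (hcov : ∀ x ∈ K, ‖x‖ = t → ∃ p ∈ K, ‖p‖ = R ∧ x + p ∈ K)
    (s : ℝ) (hs : s * s = 1) (u : E2) (hu : u ∈ K) (hut : ‖u‖ = t) :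
    ∃ p ∈ K, ‖p‖ = R ∧ ∃ ε : ℝ, 0 < ε ∧ ∀ᶠ v in nhds u, v ∈ K → ‖v‖ = t → 0 ≤ dd s u v →
      ε • v + p ∈ K := by
  have hs0 : s ≠ 0 := by rintro rfl; simp at hs
  have hneg : ∀ v p : E2, ‖v‖ = t → ‖p‖ = R → v + p ∈ K → inner ℝ v p < 0 := by
    intro v p hv hp h
    have h1 : ‖v + p‖ ≤ R := by simpa using hsub h
    have h2 := norm_add_sq_real v p
    have h3 : ‖v + p‖ ^ 2 ≤ R ^ 2 := by gcongr
    rw [hv, hp] at h2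
    nlinarith [pow_pos ht 2]
  -- parallel vectors
  have hpar : ∀ v : E2, dd s u v = 0 → v = (inner ℝ u v / t ^ 2) • u := by
    intro v hv
    have h1 : u 0 * v 1 - u 1 * v 0 = 0 := by
      unfold dd at hv
      exact (mul_eq_zero.1 hv).resolve_left hs0
    have h2 : t ^ 2 = u 0 * u 0 + u 1 * u 1 := by rw [← hut, norm2]
    have h3 : t ^ 2 • v = (inner ℝ u v) • u := by
      rw [h2, inner2]
      ext i
      fin_cases i
      · simp; linear_combination (- u 1) * h1
      · simp; linear_combination (u 0) * h1
    rw [div_eq_inv_mul, mul_smul, ← h3, smul_smul, inv_mul_cancel₀ (by positivity), one_smul]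
  by_cases hfr : ∃ᶠ v in nhds u, v ∈ K ∧ ‖v‖ = t ∧ 0 < dd s u v
  · obtain ⟨v, hvlim, hv⟩ := Filter.exists_seq_forall_of_frequently hfr
    choose q hq hqR hqv using fun n => hcov (v n) (hv n).1 (hv n).2.1
    obtain ⟨p, hp, φ, hφ, hplim⟩ := hKc.tendsto_subseq hq
    have hvl : Filter.Tendsto (fun n => v (φ n)) Filter.atTop (nhds u) :=
      hvlim.comp hφ.tendsto_atTop
    have hpR : ‖p‖ = R := by
      refine tendsto_nhds_unique hplim.norm ?_
      simp [hqR]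
    have hup : u + p ∈ K :=
      hKc.isClosed.mem_of_tendsto (hvl.add hplim) (Filter.Eventually.of_forall fun n => hqv (φ n))
    have hn := hneg u p hut hpR hup
    rcases lt_trichotomy (dd s u p) 0 with h | h | h
    · refine ⟨p, hp, hpR, ?_⟩
      obtain ⟨ε, hε, hev⟩ := tri_near K hKconv h0 s p u u hp hup h.ne
      refine ⟨ε, hε, ?_⟩
      have : ∀ᶠ v in nhds u, dd s v p < 0 :=
        (dd_cont_left s p).continuousAt.eventually_lt continuousAt_const h
      filter_upwards [hev, this] with x hx hx2 _ _ hx3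
      exact hx (div_nonneg_of_nonpos hx2.le h.le) (div_nonneg_of_nonpos (by linarith) h.le)
    · refine ⟨p, hp, hpR, ?_⟩
      have hpe := hpar p h
      set l := (- (inner ℝ u p / t ^ 2) : ℝ) with hl
      have hlpos : 0 < l := by
        rw [hl, ← neg_div]; exact div_pos (by linarith) (by positivity)
      refine ⟨l, hlpos, ?_⟩
      have hc : Continuous (fun v : E2 => ‖l • v + (1 : ℝ) • p‖) := by fun_prop
      have : ∀ᶠ v in nhds u, ‖l • v + (1 : ℝ) • p‖ < t := by
        refine hc.continuousAt.eventually_lt continuousAt_const ?_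
        have : l • u + (1 : ℝ) • p = 0 := by
          rw [one_smul, hl, neg_smul, ← hpe]; simp
        rw [this]; simpa using ht
      filter_upwards [this] with x hx hxK _ _
      have := hcone x hxK p hp l 1 hlpos.le zero_le_one hx.le
      simpa using this
    · have e1 : ∀ᶠ n in Filter.atTop, 0 < dd s u (q (φ n)) :=
        (((dd_cont_right s u).tendsto p).comp hplim).eventually (lt_mem_nhds h)
      have e2 : ∀ᶠ n in Filter.atTop, 0 < dd s (v (φ n)) (q (φ n)) := by
        have hc : Continuous (fun x : E2 × E2 => dd s x.1 x.2) := by unfold dd; fun_prop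
        exact ((hc.tendsto (u, p)).comp (hvl.prodMk_nhds hplim)).eventually (lt_mem_nhds h)
      obtain ⟨n, hn1, hn2⟩ := (e1.and e2).exists
      refine ⟨q (φ n), hq _, hqR _, ?_⟩
      obtain ⟨ε, hε, hev⟩ := tri_near K hKconv h0 s (q (φ n)) (v (φ n)) u (hq _) (hqv _) hn2.ne'
      refine ⟨ε, hε, ?_⟩
      have h1 : ∀ᶠ x in nhds u, 0 < dd s x (q (φ n)) :=
        continuousAt_const.eventually_lt (dd_cont_left s _).continuousAt hn1
      have h2 : ∀ᶠ x in nhds u, dd s (v (φ n)) x < 0 := by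
        refine (dd_cont_right s _).continuousAt.eventually_lt continuousAt_const ?_
        have := (hv (φ n)).2.2
        unfold dd at this ⊢
        linarith
      filter_upwards [hev, h1, h2] with x hx hx1 hx2 _ _ _
      exact hx (div_nonneg hx1.le hn2.le) (div_nonneg (by linarith) hn2.le)
  · obtain ⟨p, hp, hpR, hup⟩ := hcov u hu hut
    refine ⟨p, hp, hpR, 1, one_pos, ?_⟩
    have hpos : ∀ᶠ v in nhds u, 0 < (inner ℝ u v : ℝ) := by
      have hc : Continuous (fun v : E2 => (inner ℝ u v : ℝ)) := by fun_prop
      refine continuousAt_const.eventually_lt hc.continuousAt ?_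
      rw [real_inner_self_eq_norm_sq, hut]; positivity
    filter_upwards [Filter.not_frequently.1 hfr, hpos] with x hx hx0 hxK hxt hxd
    have hd : dd s u x = 0 := le_antisymm (not_lt.1 fun h => hx ⟨hxK, hxt, h⟩) hxd
    have hxe := hpar x hd
    have hlp : 0 < (inner ℝ u x : ℝ) / t ^ 2 := by positivity
    have : ‖x‖ = (inner ℝ u x / t ^ 2) * t := by
      conv_lhs => rw [hxe]
      rw [norm_smul, hut, Real.norm_of_nonneg hlp.le]
    rw [hxt] at this
    have h1 : (inner ℝ u x : ℝ) / t ^ 2 = 1 := by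
      have h2 : ((inner ℝ u x : ℝ) / t ^ 2 - 1) * t = 0 := by linarith
      rcases mul_eq_zero.1 h2 with h | h
      · linarith
      · exact absurd h ht.ne'
    rw [h1, one_smul] at hxe
    rw [hxe, one_smul]; exact hup

lemma shrink (K : Set E2) (hKconv : Convex ℝ K) (p v : E2) (hp : p ∈ K) (e e' : ℝ) (he : 0 < e)
    (he' : 0 ≤ e') (hle : e' ≤ e) (h : e • v + p ∈ K) : e' • v + p ∈ K := by
  have h1 : 0 ≤ 1 - e' / e := by rw [sub_nonneg, div_le_one he]; exact hle
  have := hKconv h hp (a := e' / e) (b := 1 - e' / e) (by positivity) h1 (by ring)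
  convert this using 1
  rw [smul_add, smul_smul, div_mul_cancel₀ _ he.ne']
  module

lemma near_zero (K : Set E2) (hKc : IsCompact K) (hKconv : Convex ℝ K) (R t : ℝ) (ht : 0 < t)
    (hsub : K ⊆ closedBall 0 R) (h0 : (0 : E2) ∈ K)
    (hcone : ∀ x ∈ K, ∀ y ∈ K, ∀ a b : ℝ, 0 ≤ a → 0 ≤ b → ‖a • x + b • y‖ ≤ t →
      a • x + b • y ∈ K)
    (hcov : ∀ x ∈ K, ‖x‖ = t → ∃ p ∈ K, ‖p‖ = R ∧ x + p ∈ K)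
    (p0 : E2) (hp0 : p0 ∈ K) (hp0R : ‖p0‖ = R) :
    ∃ F : Finset E2, (∀ r ∈ F, ‖r‖ = R) ∧ ∃ η : ℝ, 0 < η ∧
      ∀ x ∈ K, ‖x‖ < η → ∃ r ∈ F, x + r ∈ K := by
  have hS : IsCompact (K ∩ sphere (0 : E2) t) := hKc.inter_right isClosed_sphere
  have := hS.induction_on (p := fun U => ∃ F : Finset E2, (∀ r ∈ F, r ∈ K ∧ ‖r‖ = R) ∧ ∃ ε : ℝ,
      0 < ε ∧ ∀ v ∈ U, ∃ r ∈ F, ε • v + r ∈ K) ⟨∅, by simp, 1, one_pos, by simp⟩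
    (by
      rintro A B hAB ⟨F, hF, e, he, h⟩
      exact ⟨F, hF, e, he, fun v hv => h v (hAB hv)⟩)
    (by
      classical
      rintro A B ⟨F, hF, e, he, h⟩ ⟨F', hF', e', he', h'⟩
      refine ⟨F ∪ F', ?_, min e e', lt_min he he', ?_⟩
      · intro r hr
        rcases Finset.mem_union.1 hr with hr | hr
        · exact hF r hr
        · exact hF' r hr
      · rintro v (hv | hv)
        · obtain ⟨r, hr, hrv⟩ := h v hv
          exact ⟨r, Finset.mem_union_left _ hr, shrink K hKconv r v (hF r hr).1 e _ he
            (lt_min he he').le (min_le_left _ _) hrv⟩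
        · obtain ⟨r, hr, hrv⟩ := h' v hv
          exact ⟨r, Finset.mem_union_right _ hr, shrink K hKconv r v (hF' r hr).1 e' _ he'
            (lt_min he he').le (min_le_right _ _) hrv⟩)
    (by
      classical
      rintro u ⟨hu, hut⟩
      have hut : ‖u‖ = t := by simpa using hut
      obtain ⟨p, hp, hpR, e, he, hev⟩ := side K hKc hKconv R t ht hsub h0 hcone hcov 1 (by norm_num)
        u hu hut
      obtain ⟨p', hp', hpR', e', he', hev'⟩ := side K hKc hKconv R t ht hsub h0 hcone hcov (-1)
        (by norm_num) u hu hut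
      refine ⟨_, Filter.inter_mem (mem_nhdsWithin_of_mem_nhds (Filter.inter_mem hev hev'))
        self_mem_nhdsWithin, {p, p'}, ?_, min e e', lt_min he he', ?_⟩
      · intro r hr
        simp only [Finset.mem_insert, Finset.mem_singleton] at hr
        rcases hr with rfl | rfl
        · exact ⟨hp, hpR⟩
        · exact ⟨hp', hpR'⟩
      · rintro v ⟨⟨h1, h2⟩, hvK, hvt⟩
        have hvt : ‖v‖ = t := by simpa using hvt
        rcases le_total 0 (dd 1 u v) with h | h
        · exact ⟨p, by simp, shrink K hKconv p v hp e _ he (lt_min he he').le (min_le_left _ _)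
            (h1 hvK hvt h)⟩
        · refine ⟨p', by simp, shrink K hKconv p' v hp' e' _ he' (lt_min he he').le
            (min_le_right _ _) (h2 hvK hvt ?_)⟩
          unfold dd at h ⊢
          linarith)
  classical
  obtain ⟨F, hF, e, he, h⟩ := this
  refine ⟨insert p0 F, ?_, e * t, by positivity, ?_⟩
  · intro r hr
    rcases Finset.mem_insert.1 hr with rfl | hr
    · exact hp0R
    · exact (hF r hr).2
  · intro x hx hxn
    by_cases hx0 : x = 0
    · exact ⟨p0, by simp, by simpa [hx0] using hp0⟩
    have hxp : 0 < ‖x‖ := norm_pos_iff.2 hx0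
    have hnorm : ‖(t / ‖x‖) • x‖ = t := by
      rw [norm_smul, Real.norm_of_nonneg (by positivity), div_mul_cancel₀ _ hxp.ne']
    have hvK : (t / ‖x‖) • x ∈ K := by
      have := hcone x hx 0 h0 (t / ‖x‖) 0 (by positivity) le_rfl (by simpa using hnorm.le)
      simpa using this
    obtain ⟨r, hr, hrv⟩ := h _ ⟨hvK, by simpa using hnorm⟩
    refine ⟨r, Finset.mem_insert_of_mem hr, ?_⟩
    have := shrink K hKconv r _ (hF r hr).1 e (‖x‖ / t) he (by positivity)
      (by rw [div_le_iff₀ ht]; exact hxn.le) hrv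
    rw [smul_smul, show ‖x‖ / t * (t / ‖x‖) = 1 by field_simp, one_smul] at this
    exact this

lemma far (K : Set E2) (hKconv : Convex ℝ K) (hKint : (interior K).Nonempty) (R : ℝ) (hR : 0 < R)
    (hsup : ∀ w : E2, ∃ p ∈ K, ‖p‖ = R ∧ inner ℝ p w ≤ 0) (y : E2) (hy : y ∈ K) (hy0 : y ≠ 0) :
    ∃ r : E2, ‖r‖ = R ∧ y + r ∈ interior K := by
  obtain ⟨p, hp, hpR, hpy⟩ := hsup y
  have h1 : R < ‖p - y‖ := by
    have h2 := norm_sub_sq_real p y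
    have : 0 < ‖y‖ := norm_pos_iff.2 hy0
    rw [hpR] at h2
    refine lt_of_pow_lt_pow_left₀ 2 (norm_nonneg _) ?_
    nlinarith [pow_pos this 2]
  have hcl : p ∈ closure (interior K) := by
    rw [hKconv.closure_interior_eq_closure_of_nonempty_interior hKint]
    exact subset_closure hp
  have hop : IsOpen {x : E2 | R < ‖x - y‖} := isOpen_lt (by fun_prop) (by fun_prop)
  obtain ⟨q, hq1, hq2⟩ := mem_closure_iff.1 hcl _ hop h1
  have hq1 : R < ‖q - y‖ := hq1
  have hpos : 0 < ‖q - y‖ := hR.trans hq1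
  refine ⟨(R / ‖q - y‖) • (q - y), ?_, ?_⟩
  · rw [norm_smul, Real.norm_of_nonneg (by positivity), div_mul_cancel₀ _ hpos.ne']
  · have := hKconv.combo_self_interior_mem_interior hy hq2 (a := 1 - R / ‖q - y‖)
      (b := R / ‖q - y‖) (by rw [sub_nonneg, div_le_one hpos]; exact hq1.le)
      (by positivity) (by ring)
    convert this using 1
    module

lemma core (K : Set E2) (hKc : IsCompact K) (hKconv : Convex ℝ K)
    (hKint : (interior K).Nonempty) (R : ℝ) (hR : 0 < R)
    (hsub : K ⊆ closedBall 0 R)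
    (hmin : ∀ (c' : E2) (R' : ℝ), K ⊆ closedBall c' R' → R ≤ R') (δ : ℝ) (hδ : 0 < δ)
    (hcov : ∀ x ∈ K, ‖x‖ < δ → ∃ p ∈ K, ‖p‖ = R ∧ x + p ∈ K) :
    ∃ F : Finset E2, (∀ r ∈ F, ‖r‖ = R) ∧ ∀ x ∈ K, ∃ r ∈ F, x + r ∈ K := by
  classical
  have hsup := support_pt K hKc (hKint.mono interior_subset) R hR hsub hmin
  have h0 := zero_mem K hKc hKconv (fun w => by
    obtain ⟨p, hp, _, h⟩ := hsup w
    exact ⟨p, hp, h⟩)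
  obtain ⟨t0, ht0, hcone⟩ := cone_ball K hKc hKconv hKint R hR hsup h0
  obtain ⟨p0, hp0, hp0R, _⟩ := hsup 0
  obtain ⟨F0, hF0, η, hη, hnear⟩ := near_zero K hKc hKconv R (min t0 (δ / 2)) (by positivity) hsub h0
    (fun x hx y hy a b ha hb h => hcone x hx y hy a b ha hb (h.trans (min_le_left _ _)))
    (fun x hx h => hcov x hx (by
      have := min_le_right t0 (δ / 2)
      linarith)) p0 hp0 hp0R
  refine hKc.induction_on (p := fun U => ∃ F : Finset E2, (∀ r ∈ F, ‖r‖ = R) ∧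
    ∀ x ∈ U, ∃ r ∈ F, x + r ∈ K) ⟨∅, by simp, by simp⟩ ?_ ?_ ?_
  · rintro A B hAB ⟨F, hF, h⟩
    exact ⟨F, hF, fun v hv => h v (hAB hv)⟩
  · rintro A B ⟨F, hF, h⟩ ⟨F', hF', h'⟩
    refine ⟨F ∪ F', ?_, ?_⟩
    · intro r hr
      rcases Finset.mem_union.1 hr with hr | hr
      · exact hF r hr
      · exact hF' r hr
    · rintro v (hv | hv)
      · obtain ⟨r, hr, hrv⟩ := h v hv
        exact ⟨r, Finset.mem_union_left _ hr, hrv⟩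
      · obtain ⟨r, hr, hrv⟩ := h' v hv
        exact ⟨r, Finset.mem_union_right _ hr, hrv⟩
  · intro y hy
    by_cases hy0 : y = 0
    · subst hy0
      refine ⟨_, Filter.inter_mem (mem_nhdsWithin_of_mem_nhds (ball_mem_nhds 0 hη))
        self_mem_nhdsWithin, F0, hF0, ?_⟩
      rintro x ⟨hx1, hx2⟩
      exact hnear x hx2 (by simpa using hx1)
    · obtain ⟨r, hrR, hr⟩ := far K hKconv hKint R hR hsup y hy hy0
      have hc : Continuous (fun x : E2 => x + r) := by fun_prop
      refine ⟨_, mem_nhdsWithin_of_mem_nhds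
        (hc.continuousAt.preimage_mem_nhds (isOpen_interior.mem_nhds hr)), {r}, by simpa using hrR, ?_⟩
      intro x hx
      exact ⟨r, by simp, interior_subset hx⟩

lemma iq_lt_top_iff (K : Set E2) (R : ℝ) : iq K R < ⊤ ↔ ∃ s : Finset E2,
    (∀ r ∈ s, ‖r‖ = 1) ∧ ∀ x ∈ K, ∃ r ∈ s, x + R • r ∈ K := by
  unfold iq
  rw [sInf_lt_iff]
  constructor
  · rintro ⟨m, ⟨s, _, h1, h2⟩, _⟩
    exact ⟨s, h1, h2⟩
  · rintro ⟨s, h1, h2⟩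
    exact ⟨s.card, ⟨s, rfl, h1, h2⟩, ENat.coe_lt_top _⟩

/-- Theorem 4.2: a two-dimensional convex body `K ⊆ ℝ²` with circumball `B(c,R)` satisfies
`i(K,R(K)) < ∞` if and only if the translates `K + (c - x)`, `x ∈ K ∩ bd B(c,R)`, cover a
neighborhood of `c` in `K`. -/
theorem iq_at_circumradius_finite_iff_two_dim (K : Set (EuclideanSpace ℝ (Fin 2)))
    (hKc : IsCompact K) (hKconv : Convex ℝ K) (hKint : (interior K).Nonempty)
    (c : EuclideanSpace ℝ (Fin 2)) (R : ℝ) (hcirc : IsCircumball K c R) :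
    iq K R < ⊤ ↔ ∃ δ : ℝ, 0 < δ ∧
      K ∩ ball c δ ⊆ ⋃ x ∈ K ∩ sphere c R, (· + (c - x)) '' K := by
  classical
  obtain ⟨hsub, hmin⟩ := hcirc
  have hR : 0 < R := by
    by_contra hR
    have h1 : K ⊆ {c} := fun x hx => by
      have := hsub hx
      rw [mem_closedBall] at this
      exact dist_le_zero.1 (this.trans (not_lt.1 hR))
    have h2 := interior_mono h1
    rw [interior_singleton] at h2
    exact hKint.ne_empty (subset_empty_iff.1 h2)
  rw [iq_lt_top_iff]
  constructor
  · rintro ⟨s, hs1, hs⟩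
    have hev : ∀ r ∈ s, ∀ᶠ x in nhds c, x + R • r ∈ K → c + R • r ∈ K := by
      intro r _
      by_cases h : c + R • r ∈ K
      · exact Filter.Eventually.of_forall fun _ _ => h
      · have hc : Continuous (fun x : E2 => x + R • r) := by fun_prop
        have := hc.continuousAt.preimage_mem_nhds (hKc.isClosed.isOpen_compl.mem_nhds h)
        filter_upwards [this] with x hx hx2
        exact absurd hx2 hx
    obtain ⟨δ, hδ, hb⟩ := Metric.eventually_nhds_iff_ball.1 ((Filter.eventually_all_finset s).2 hev)
    refine ⟨δ, hδ, ?_⟩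
    rintro x ⟨hxK, hxb⟩
    obtain ⟨r, hr, hxr⟩ := hs x hxK
    have := hb x hxb r hr hxr
    simp only [mem_iUnion]
    refine ⟨c + R • r, ⟨this, ?_⟩, x + R • r, hxr, ?_⟩
    · simp [norm_smul, hs1 r hr, abs_of_pos hR]
    · simp
  · rintro ⟨δ, hδ, hcov⟩
    let e := Homeomorph.addRight c
    have hK' : ∀ x, x ∈ e ⁻¹' K ↔ x + c ∈ K := fun x => Iff.rfl
    obtain ⟨F, hF, h⟩ := core (e ⁻¹' K) (e.isCompact_preimage.2 hKc)
      (by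
        have := hKconv.translate_preimage_left c
        exact this)
      (by
        rw [← e.preimage_interior]
        exact hKint.preimage e.surjective) R hR
      (by
        intro x hx
        have := hsub ((hK' x).1 hx)
        simpa [dist_eq_norm] using this)
      (by
        intro c' R' h
        refine hmin (c' + c) R' (fun y hy => ?_)
        have := h ((hK' (y - c)).2 (by simpa using hy))
        rw [mem_closedBall, dist_eq_norm] at this ⊢
        convert this using 2
        abel) δ hδ
      (by
        intro x hx hxn
        have := hcov ⟨(hK' x).1 hx, by simpa [dist_eq_norm] using hxn⟩
        simp only [mem_iUnion] at this
        obtain ⟨p, ⟨hp, hpR⟩, k, hk, hkx⟩ := this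
        refine ⟨p - c, (hK' _).2 (by simpa using hp), by simpa [dist_eq_norm] using hpR,
          (hK' _).2 ?_⟩
        have hkx : k + (c - p) = x + c := hkx
        have : x + (p - c) + c = k := by
          have : k = x + c - (c - p) := eq_sub_of_add_eq hkx
          rw [this]; abel
        rwa [this])
    refine ⟨F.image (fun r => R⁻¹ • r), ?_, ?_⟩
    · intro r hr
      obtain ⟨r', hr', rfl⟩ := Finset.mem_image.1 hr
      rw [norm_smul, hF r' hr', Real.norm_of_nonneg (by positivity), inv_mul_cancel₀ hR.ne']
    · intro x hx
      obtain ⟨r, hr, hxr⟩ := h (x - c) ((hK' _).2 (by simpa using hx))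
      refine ⟨R⁻¹ • r, Finset.mem_image_of_mem _ hr, ?_⟩
      rw [smul_smul, mul_inv_cancel₀ hR.ne', one_smul]
      have := (hK' _).1 hxr
      convert this using 1
      abel
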